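/- arXiv:2506.03754 — 2 statements merged into one kernel-verified Lean document; each statement's English description precedes it below -/
import Mathlib

section
/- For every 5 × 5 totally nonnegative real matrix Q, one has Δ(12|45)·Δ(345|123) + Δ(12|34)·Δ(345|125) − Δ(12|35)·Δ(345|124) ≥ 0, where Δ(I|J) denotes the minor of Q with row set I and column set J. -/
/-- A real matrix is totally nonnegative if all its minors are nonnegative. -/
def IsTotallyNonneg {m n : ℕ} (M : Matrix (Fin m) (Fin n) ℝ) : Prop :=
  ∀ (k : ℕ) (f : Fin k → Fin m) (g : Fin k → Fin n),
    StrictMono f → StrictMono g → 0 ≤ (M.submatrix f g).det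

/-- The `2 × 2` determinant with rows `a`, `b` and columns `i`, `j`. -/
def pairDet {ι : Type*} (a b : ι → ℝ) (i j : ι) : ℝ :=
  a i * b j - a j * b i

/-- The `3 × 3` determinant with rows `a`, `b`, `c` and columns `i`, `j`, `k`. -/
def tripleDet {ι : Type*} (a b c : ι → ℝ) (i j k : ι) : ℝ :=
  a i * pairDet b c j k - a j * pairDet b c i k + a k * pairDet b c i j

namespace IsTotallyNonneg

variable {m n : ℕ} {M : Matrix (Fin m) (Fin n) ℝ}

theorem entry_nonneg (hM : IsTotallyNonneg M) (i : Fin m) (j : Fin n) : 0 ≤ M i j := by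
  have h := hM 1 ![i] ![j] (Subsingleton.strictMono _) (Subsingleton.strictMono _)
  rwa [Matrix.det_fin_one] at h

theorem pairDet_nonneg (hM : IsTotallyNonneg M) {a b : Fin m} {i j : Fin n}
    (hab : a < b) (hij : i < j) : 0 ≤ pairDet (M a) (M b) i j := by
  have h := hM 2 ![a, b] ![i, j] (by simpa [Fin.strictMono_iff_lt_succ])
    (by simpa [Fin.strictMono_iff_lt_succ])
  rwa [Matrix.det_fin_two] at h

theorem tripleDet_nonneg (hM : IsTotallyNonneg M) {a b c : Fin m} {i j k : Fin n}
    (hab : a < b) (hbc : b < c) (hij : i < j) (hjk : j < k) :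
    0 ≤ tripleDet (M a) (M b) (M c) i j k := by
  have h := hM 3 ![a, b, c] ![i, j, k]
    (by simp [Fin.strictMono_iff_lt_succ, Fin.forall_fin_two, hab, hbc])
    (by simp [Fin.strictMono_iff_lt_succ, Fin.forall_fin_two, hij, hjk])
  rw [Matrix.det_fin_three] at h
  simp only [Matrix.submatrix_apply, Matrix.cons_val] at h
  unfold tripleDet pairDet
  linarith

end IsTotallyNonneg

section Elimination

variable {ι : Type*} {a b c d : ι → ℝ} {p i j k : ι}

/-- Eliminating the entry `d p` from the row `d` by means of the row `c` keeps the `2 × 2` minors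
with an earlier row `b` nonnegative. -/
theorem pairDet_elimination_nonneg (hbi : 0 ≤ b i) (hbj : 0 ≤ b j) (hcp : 0 ≤ c p)
    (hci : 0 ≤ c i) (hcj : 0 ≤ c j) (hbc : 0 ≤ pairDet b c i j) (hbd : 0 ≤ pairDet b d i j)
    (hcd : 0 ≤ pairDet c d i j) (hcdi : 0 ≤ pairDet c d p i) (hcdj : 0 ≤ pairDet c d p j) :
    0 ≤ c p * pairDet b d i j - d p * pairDet b c i j := by
  rcases hci.lt_or_eq with hi | hi
  · refine (mul_nonneg_iff_of_pos_left hi).1 ?_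
    calc 0 ≤ pairDet b c i j * pairDet c d p i + c p * b i * pairDet c d i j := by positivity
      _ = _ := by unfold pairDet; ring
  rcases hcj.lt_or_eq with hj | hj
  · refine (mul_nonneg_iff_of_pos_left hj).1 ?_
    calc 0 ≤ pairDet b c i j * pairDet c d p j + c p * b j * pairDet c d i j := by positivity
      _ = _ := by unfold pairDet; ring
  have h0 : pairDet b c i j = 0 := by simp [pairDet, ← hi, ← hj]
  rw [h0, mul_zero, sub_zero]
  exact mul_nonneg hcp hbd

/-- A `3 × 3` determinant vanishes if the `2 × 2` minors of its last two rows do. -/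
theorem tripleDet_eq_zero (hjk : pairDet b c j k = 0) (hik : pairDet b c i k = 0)
    (hij : pairDet b c i j = 0) : tripleDet a b c i j k = 0 := by
  simp [tripleDet, hjk, hik, hij]

/-- Eliminating the entry `d p` from the row `d` by means of the row `c` keeps the `3 × 3` minors
with two earlier rows `a`, `b` nonnegative. -/
theorem tripleDet_elimination_nonneg (hcp : 0 ≤ c p)
    (habij : 0 ≤ pairDet a b i j) (habik : 0 ≤ pairDet a b i k) (habjk : 0 ≤ pairDet a b j k)
    (hbcij : 0 ≤ pairDet b c i j) (hbcik : 0 ≤ pairDet b c i k) (hbcjk : 0 ≤ pairDet b c j k)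
    (habc : 0 ≤ tripleDet a b c i j k) (habd : 0 ≤ tripleDet a b d i j k)
    (hbcd : 0 ≤ tripleDet b c d i j k)
    (hij : 0 ≤ c p * pairDet b d i j - d p * pairDet b c i j)
    (hik : 0 ≤ c p * pairDet b d i k - d p * pairDet b c i k)
    (hjk : 0 ≤ c p * pairDet b d j k - d p * pairDet b c j k) :
    0 ≤ c p * tripleDet a b d i j k - d p * tripleDet a b c i j k := by
  rcases hbcij.lt_or_eq with h1 | h1
  · refine (mul_nonneg_iff_of_pos_left h1).1 ?_
    calc 0 ≤ tripleDet a b c i j k * (c p * pairDet b d i j - d p * pairDet b c i j)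
          + c p * pairDet a b i j * tripleDet b c d i j k := by positivity
      _ = _ := by unfold tripleDet pairDet; ring
  rcases hbcik.lt_or_eq with h2 | h2
  · refine (mul_nonneg_iff_of_pos_left h2).1 ?_
    calc 0 ≤ tripleDet a b c i j k * (c p * pairDet b d i k - d p * pairDet b c i k)
          + c p * pairDet a b i k * tripleDet b c d i j k := by positivity
      _ = _ := by unfold tripleDet pairDet; ring
  rcases hbcjk.lt_or_eq with h3 | h3
  · refine (mul_nonneg_iff_of_pos_left h3).1 ?_
    calc 0 ≤ tripleDet a b c i j k * (c p * pairDet b d j k - d p * pairDet b c j k)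
          + c p * pairDet a b j k * tripleDet b c d i j k := by positivity
      _ = _ := by unfold tripleDet pairDet; ring
  rw [tripleDet_eq_zero h3.symm h2.symm h1.symm, mul_zero, sub_zero]
  exact mul_nonneg hcp habd

end Elimination

namespace IsTotallyNonneg

variable {m n : ℕ} {M : Matrix (Fin m) (Fin n) ℝ} {a b c d : Fin m} {p i j k : Fin n}

theorem pairDet_elimination (hM : IsTotallyNonneg M) (hbc : b < c) (hcd : c < d)
    (hpi : p < i) (hij : i < j) :
    0 ≤ M c p * pairDet (M b) (M d) i j - M d p * pairDet (M b) (M c) i j :=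
  pairDet_elimination_nonneg (hM.entry_nonneg b i) (hM.entry_nonneg b j) (hM.entry_nonneg c p)
    (hM.entry_nonneg c i) (hM.entry_nonneg c j) (hM.pairDet_nonneg hbc hij)
    (hM.pairDet_nonneg (hbc.trans hcd) hij) (hM.pairDet_nonneg hcd hij)
    (hM.pairDet_nonneg hcd hpi) (hM.pairDet_nonneg hcd (hpi.trans hij))

theorem tripleDet_elimination (hM : IsTotallyNonneg M) (hab : a < b) (hbc : b < c) (hcd : c < d)
    (hpi : p < i) (hij : i < j) (hjk : j < k) :
    0 ≤ M c p * tripleDet (M a) (M b) (M d) i j k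
      - M d p * tripleDet (M a) (M b) (M c) i j k :=
  tripleDet_elimination_nonneg (hM.entry_nonneg c p)
    (hM.pairDet_nonneg hab hij) (hM.pairDet_nonneg hab (hij.trans hjk))
    (hM.pairDet_nonneg hab hjk) (hM.pairDet_nonneg hbc hij)
    (hM.pairDet_nonneg hbc (hij.trans hjk)) (hM.pairDet_nonneg hbc hjk)
    (hM.tripleDet_nonneg hab hbc hij hjk) (hM.tripleDet_nonneg hab (hbc.trans hcd) hij hjk)
    (hM.tripleDet_nonneg hbc hcd hij hjk)
    (hM.pairDet_elimination hbc hcd hpi hij)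
    (hM.pairDet_elimination hbc hcd hpi (hij.trans hjk))
    (hM.pairDet_elimination hbc hcd (hpi.trans hij) hjk)

/-- In the expansion along its first column of the minor with rows `a`, `b`, `c`, `d` and columns
`p`, `i`, `j`, `k`, the terms after the first one have a nonpositive sum. -/
theorem expansion_tail_nonneg (hM : IsTotallyNonneg M) (hab : a < b) (hbc : b < c) (hcd : c < d)
    (hpi : p < i) (hij : i < j) (hjk : j < k) :
    0 ≤ M b p * tripleDet (M a) (M c) (M d) i j k - M c p * tripleDet (M a) (M b) (M d) i j k
      + M d p * tripleDet (M a) (M b) (M c) i j k := by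
  have habc := hM.tripleDet_nonneg hab hbc hij hjk
  have hbcd := hM.tripleDet_nonneg hbc hcd hij hjk
  have habd := hM.tripleDet_nonneg hab (hbc.trans hcd) hij hjk
  have key : ∀ {x y : Fin n}, p < x → x < y →
      pairDet (M b) (M c) x y * (M b p * tripleDet (M a) (M c) (M d) i j k
        - M c p * tripleDet (M a) (M b) (M d) i j k + M d p * tripleDet (M a) (M b) (M c) i j k)
      = tripleDet (M a) (M b) (M c) i j k * tripleDet (M b) (M c) (M d) p x y
        + tripleDet (M b) (M c) (M d) i j k *
          (M b p * pairDet (M a) (M c) x y - M c p * pairDet (M a) (M b) x y) →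
      0 < pairDet (M b) (M c) x y →
      0 ≤ M b p * tripleDet (M a) (M c) (M d) i j k
        - M c p * tripleDet (M a) (M b) (M d) i j k
        + M d p * tripleDet (M a) (M b) (M c) i j k := by
    intro x y hx hxy h hpos
    refine (mul_nonneg_iff_of_pos_left hpos).1 ?_
    rw [h]
    exact add_nonneg (mul_nonneg habc (hM.tripleDet_nonneg hbc hcd hx hxy))
      (mul_nonneg hbcd (hM.pairDet_elimination hab hbc hx hxy))
  rcases (hM.pairDet_nonneg hbc hij).lt_or_eq with h1 | h1
  · exact key hpi hij (by unfold tripleDet pairDet; ring) h1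
  rcases (hM.pairDet_nonneg hbc (hij.trans hjk)).lt_or_eq with h2 | h2
  · exact key hpi (hij.trans hjk) (by unfold tripleDet pairDet; ring) h2
  rcases (hM.pairDet_nonneg hbc hjk).lt_or_eq with h3 | h3
  · exact key (hpi.trans hij) hjk (by unfold tripleDet pairDet; ring) h3
  have h0 : tripleDet (M a) (M b) (M c) i j k = 0 :=
    tripleDet_eq_zero h3.symm h2.symm h1.symm
  have h0' : tripleDet (M b) (M c) (M d) i j k = 0 := by
    have : tripleDet (M b) (M c) (M d) i j k = M d i * pairDet (M b) (M c) j k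
        - M d j * pairDet (M b) (M c) i k + M d k * pairDet (M b) (M c) i j := by
      unfold tripleDet pairDet; ring
    rw [this, ← h1, ← h2, ← h3]; ring
  rw [h0, mul_zero, add_zero]
  have entry_key : ∀ {x : Fin n}, p < x →
      M a x * tripleDet (M b) (M c) (M d) i j k - M b x * tripleDet (M a) (M c) (M d) i j k
        + M c x * tripleDet (M a) (M b) (M d) i j k
        - M d x * tripleDet (M a) (M b) (M c) i j k = 0 →
      0 < M b x →
      0 ≤ M b p * tripleDet (M a) (M c) (M d) i j k
        - M c p * tripleDet (M a) (M b) (M d) i j k := by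
    intro x hx h hpos
    refine (mul_nonneg_iff_of_pos_left hpos).1 ?_
    calc 0 ≤ tripleDet (M a) (M b) (M d) i j k * pairDet (M b) (M c) p x :=
          mul_nonneg habd (hM.pairDet_nonneg hbc hx)
      _ = _ := by
        rw [h0, h0'] at h
        unfold pairDet
        linear_combination M b p * h
  rcases (hM.entry_nonneg b i).lt_or_eq with hi | hi
  · exact entry_key hpi (by unfold tripleDet pairDet; ring) hi
  rcases (hM.entry_nonneg b j).lt_or_eq with hj | hj
  · exact entry_key (hpi.trans hij) (by unfold tripleDet pairDet; ring) hj
  rcases (hM.entry_nonneg b k).lt_or_eq with hk | hk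
  · exact entry_key (hpi.trans (hij.trans hjk)) (by unfold tripleDet pairDet; ring) hk
  have hz : tripleDet (M a) (M b) (M d) i j k = 0 := by
    apply tripleDet_eq_zero <;> simp [pairDet, ← hi, ← hj, ← hk]
  rw [hz, mul_zero, sub_zero]
  exact mul_nonneg (hM.entry_nonneg b p)
    (hM.tripleDet_nonneg (hab.trans hbc) hcd hij hjk)

variable {e : Fin m} {q : Fin n}

/-- Eliminating the columns `p`, `q` from the rows `c`, `d`, `e` keeps the `3 × 3` minors with two
earlier rows `a`, `b` nonnegative. -/
theorem tripleDet_double_elimination (hM : IsTotallyNonneg M) (hab : a < b) (hbc : b < c)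
    (hcd : c < d) (hde : d < e) (hpq : p < q) (hqi : q < i) (hij : i < j) (hjk : j < k) :
    0 ≤ pairDet (M c) (M d) p q * tripleDet (M a) (M b) (M e) i j k
      - pairDet (M c) (M e) p q * tripleDet (M a) (M b) (M d) i j k
      + pairDet (M d) (M e) p q * tripleDet (M a) (M b) (M c) i j k := by
  have hbd := hbc.trans hcd
  have hpi := hpq.trans hqi
  have hpj := hpi.trans hij
  have hik := hij.trans hjk
  rcases (hM.entry_nonneg d p).lt_or_eq with hp | hp
  · -- The rows `d` and `e` after one step of Neville elimination in the column `p`.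
    let C : Fin n → ℝ := fun x => pairDet (M c) (M d) p x
    let D : Fin n → ℝ := fun x => pairDet (M d) (M e) p x
    have hbC : ∀ {x y : Fin n}, p < x → x < y → 0 ≤ pairDet (M b) C x y := by
      intro x y hx hxy
      refine (hM.pairDet_elimination hbc hcd hx hxy).trans_eq ?_
      simp only [C, pairDet]; ring
    have hbD : ∀ {x y : Fin n}, p < x → x < y → 0 ≤ pairDet (M b) D x y := by
      intro x y hx hxy
      refine (hM.pairDet_elimination hbd hde hx hxy).trans_eq ?_
      simp only [D, pairDet]; ring
    have hCD : ∀ {x y : Fin n}, p < x → x < y → 0 ≤ pairDet C D x y := by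
      intro x y hx hxy
      refine (mul_nonneg hp.le (hM.tripleDet_nonneg hcd hde hx hxy)).trans_eq ?_
      simp only [C, D, tripleDet, pairDet]; ring
    have hC : ∀ {x : Fin n}, p < x → 0 ≤ C x := fun hx => hM.pairDet_nonneg hcd hx
    have hbCD : ∀ {x y : Fin n}, q < x → x < y →
        0 ≤ C q * pairDet (M b) D x y - D q * pairDet (M b) C x y := by
      intro x y hx hxy
      have hpx := hpq.trans hx
      exact pairDet_elimination_nonneg (hM.entry_nonneg b x) (hM.entry_nonneg b y) (hC hpq)
        (hC hpx) (hC (hpx.trans hxy)) (hbC hpx hxy) (hbD hpx hxy) (hCD hpx hxy)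
        (hCD hpq hx) (hCD hpq (hx.trans hxy))
    have habC : 0 ≤ tripleDet (M a) (M b) C i j k := by
      refine (hM.tripleDet_elimination hab hbc hcd hpi hij hjk).trans_eq ?_
      simp only [C, tripleDet, pairDet]; ring
    have habD : 0 ≤ tripleDet (M a) (M b) D i j k := by
      refine (hM.tripleDet_elimination hab hbd hde hpi hij hjk).trans_eq ?_
      simp only [D, tripleDet, pairDet]; ring
    have hbCD' : 0 ≤ tripleDet (M b) C D i j k := by
      refine (mul_nonneg hp.le (hM.expansion_tail_nonneg hbc hcd hde hpi hij hjk)).trans_eq ?_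
      simp only [C, D, tripleDet, pairDet]; ring
    refine (mul_nonneg_iff_of_pos_left hp).1 ?_
    refine (tripleDet_elimination_nonneg (hC hpq) (hM.pairDet_nonneg hab hij)
      (hM.pairDet_nonneg hab hik) (hM.pairDet_nonneg hab hjk) (hbC hpi hij) (hbC hpi hik)
      (hbC hpj hjk) habC habD hbCD' (hbCD hqi hij) (hbCD hqi hik)
      (hbCD (hqi.trans hij) hjk)).trans_eq ?_
    simp only [C, D, tripleDet, pairDet]; ring
  rcases (hM.entry_nonneg e p).lt_or_eq with he | he
  · have hrow : ∀ {x : Fin n}, p < x → M d x = 0 := by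
      intro x hx
      have h := hM.pairDet_nonneg hde hx
      simp only [pairDet, ← hp, zero_mul, zero_sub, Left.nonneg_neg_iff] at h
      exact le_antisymm (nonpos_of_mul_nonpos_left h he) (hM.entry_nonneg d x)
    simp [tripleDet, pairDet, ← hp, hrow hpq, hrow hpi, hrow hpj, hrow (hpj.trans hjk)]
  · refine (mul_nonneg (hM.entry_nonneg c p)
      (hM.tripleDet_elimination hab hbd hde hqi hij hjk)).trans_eq ?_
    simp only [pairDet, ← hp, ← he]; ring

end IsTotallyNonneg

theorem stmt_4 (Q : Matrix (Fin 5) (Fin 5) ℝ)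
    (hTNN : ∀ (k : ℕ) (f : Fin k → Fin 5) (g : Fin k → Fin 5),
      StrictMono f → StrictMono g → 0 ≤ (Q.submatrix f g).det) :
    0 ≤ (Q.submatrix ![0, 1] ![3, 4]).det * (Q.submatrix ![2, 3, 4] ![0, 1, 2]).det
      + (Q.submatrix ![0, 1] ![2, 3]).det * (Q.submatrix ![2, 3, 4] ![0, 1, 4]).det
      - (Q.submatrix ![0, 1] ![2, 4]).det * (Q.submatrix ![2, 3, 4] ![0, 1, 3]).det := by
  have hQ : IsTotallyNonneg Q := hTNN
  convert hQ.tripleDet_double_elimination (a := 0) (b := 1) (c := 2) (d := 3) (e := 4)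
    (p := 0) (q := 1) (i := 2) (j := 3) (k := 4) (by decide) (by decide) (by decide) (by decide)
    (by decide) (by decide) (by decide) (by decide) using 1
  simp only [Matrix.det_fin_two, Matrix.det_fin_three, Matrix.submatrix_apply, Matrix.cons_val,
    tripleDet, pairDet]
  ring
end

section
/- If G is a planar network with n sources and n' sinks and w : V → ℝ≥0 is a nonnegative vertex weighting, then the n × n' matrix Q with entries q_{ij} = Σ_{φ ∈ Φ_{i|j}} Π_{v ∈ V_φ} w(v) is totally nonnegative: every minor of Q is nonnegative. -/
/-- `p` is a directed path in the digraph with edge relation `E`,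
starting at `a` and ending at `b` (given as its list of vertices). -/
def IsDirPath {V : Type*} (E : V → V → Prop) (a b : V) (p : List V) : Prop :=
  p ≠ [] ∧ p.Chain' E ∧ p.head? = some a ∧ p.getLast? = some b

section LindstromGesselViennot

open Equiv Finset

variable {V ι : Type*} {E : V → V → Prop}

lemma IsDirPath.nodup (hacyc : ∀ v : V, ¬ Relation.TransGen E v v) {a b : V} {p : List V}
    (hp : IsDirPath E a b p) : p.Nodup := by
  have h : p.IsChain (Relation.TransGen E) := hp.2.1.imp fun _ _ h => Relation.TransGen.single h
  refine h.pairwise.imp ?_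
  rintro x _ hxy rfl
  exact hacyc x hxy

lemma finite_setOf_isDirPath [Finite V] (hacyc : ∀ v : V, ¬ Relation.TransGen E v v) (a b : V) :
    {p : List V | IsDirPath E a b p}.Finite := by
  cases nonempty_fintype V
  refine (List.finite_length_le V (Fintype.card V)).subset fun p hp => ?_
  exact (hp.nodup hacyc).length_le_card

variable [DecidableEq V]

lemma takeWhile_ne_append_cons {v : V} {l : List V} (hv : v ∉ l) (l' : List V) :
    (l ++ v :: l').takeWhile (· ≠ v) = l := by
  rw [List.takeWhile_append_of_pos]
  · simp
  · intro x hx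
    simpa using ne_of_mem_of_not_mem hx hv

lemma dropWhile_ne_append_cons {v : V} {l : List V} (hv : v ∉ l) (l' : List V) :
    (l ++ v :: l').dropWhile (· ≠ v) = v :: l' := by
  rw [List.dropWhile_append_of_pos]
  · simp
  · intro x hx
    simpa using ne_of_mem_of_not_mem hx hv

/-- The initial segment of `p` before `v`, followed by the final segment of `q` from `v` on. -/
def splice (v : V) (p q : List V) : List V :=
  p.takeWhile (· ≠ v) ++ q.dropWhile (· ≠ v)

lemma splice_self (v : V) (p : List V) : splice v p p = p :=
  List.takeWhile_append_dropWhile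

lemma takeWhile_dropWhile_ne (v : V) (q : List V) :
    (q.dropWhile (· ≠ v)).takeWhile (· ≠ v) = [] := by
  induction q with
  | nil => simp
  | cons x q ih => by_cases h : x = v <;> simp_all

lemma takeWhile_splice (v : V) (p q : List V) :
    (splice v p q).takeWhile (· ≠ v) = p.takeWhile (· ≠ v) := by
  rw [splice, List.takeWhile_append_of_pos fun x (hx : x ∈ p.takeWhile (· ≠ v)) => List.mem_takeWhile_imp hx,
    takeWhile_dropWhile_ne, List.append_nil]

lemma dropWhile_splice (v : V) (p q : List V) :
    (splice v p q).dropWhile (· ≠ v) = q.dropWhile (· ≠ v) := by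
  refine List.append_cancel_left (as := (splice v p q).takeWhile (· ≠ v)) ?_
  rw [List.takeWhile_append_dropWhile, takeWhile_splice, splice]

lemma IsDirPath.splice {a b c d v : V} {p q : List V} (hp : IsDirPath E a b p)
    (hq : IsDirPath E c d q) (hvp : v ∈ p) (hvq : v ∈ q) :
    IsDirPath E a d (splice v p q) := by
  obtain ⟨p₁, p₂, rfl, hp₁⟩ := List.eq_append_cons_of_mem hvp
  obtain ⟨q₁, q₂, rfl, hq₁⟩ := List.eq_append_cons_of_mem hvq
  rw [_root_.splice, takeWhile_ne_append_cons hp₁, dropWhile_ne_append_cons hq₁]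
  obtain ⟨-, hpc, hph, -⟩ := hp
  obtain ⟨-, hqc, -, hql⟩ := hq
  refine ⟨by simp, ?_, ?_, ?_⟩
  · exact List.isChain_split.2 ⟨(List.isChain_split.1 hpc).1, (List.isChain_split.1 hqc).2⟩
  · cases p₁ <;> simpa using hph
  · simpa using hql

lemma mem_splice_self {v : V} {p q : List V} (hq : v ∈ q) : v ∈ splice v p q := by
  obtain ⟨q₁, q₂, rfl, hq₁⟩ := List.eq_append_cons_of_mem hq
  rw [splice, dropWhile_ne_append_cons hq₁]
  simp

lemma two_le_sum_count_iff [Fintype ι] {p : ι → List V} (hp : ∀ l, (p l).Nodup) (v : V) :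
    2 ≤ ∑ l, (p l).count v ↔ ∃ x : ι × ι, x.1 ≠ x.2 ∧ v ∈ p x.1 ∧ v ∈ p x.2 := by
  have h : ∑ l, (p l).count v = #{l | v ∈ p l} := by
    rw [card_filter]
    exact sum_congr rfl fun l _ => (hp l).count
  rw [h, Nat.succ_le_iff, one_lt_card]
  simp only [mem_filter, mem_univ, true_and, Prod.exists]
  exact ⟨fun ⟨a, ha, b, hb, hab⟩ => ⟨a, b, hab, ha, hb⟩,
    fun ⟨a, b, hab, ha, hb⟩ => ⟨a, ha, b, hb, hab⟩⟩

/-- A vertex covered at least twice by a family of lists, chosen in terms of the multiset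
of covered vertices only. -/
noncomputable def sharedVertex [Fintype ι] [Nonempty V] (p : ι → List V) : V :=
  Classical.epsilon fun v => 2 ≤ ∑ l, (p l).count v

/-- Two indices of lists through `v`, chosen in terms of the set of all such indices only. -/
noncomputable def sharedIndices [Nonempty ι] (v : V) (p : ι → List V) : ι × ι :=
  Classical.epsilon fun x => x.1 ≠ x.2 ∧ v ∈ p x.1 ∧ v ∈ p x.2

variable [DecidableEq ι]

/-- Exchange the final segments, from `v` on, of the `i`-th and the `j`-th list of a family. -/
def swapTails (v : V) (i j : ι) (p : ι → List V) : ι → List V :=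
  fun l => splice v (p l) (p (swap i j l))

lemma swapTails_swapTails (v : V) (i j : ι) (p : ι → List V) :
    swapTails v i j (swapTails v i j p) = p := by
  funext l
  change splice v (splice v (p l) _) (splice v _ (p (swap i j (swap i j l)))) = p l
  rw [splice, takeWhile_splice, dropWhile_splice, swap_apply_self]
  exact splice_self v (p l)

lemma mem_swapTails_iff {v : V} {i j : ι} {p : ι → List V} (hi : v ∈ p i) (hj : v ∈ p j) (l : ι) :
    v ∈ swapTails v i j p l ↔ v ∈ p l := by
  unfold swapTails
  by_cases hli : l = i
  · subst hli
    rw [swap_apply_left]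
    exact iff_of_true (mem_splice_self hj) hi
  by_cases hlj : l = j
  · subst hlj
    rw [swap_apply_right]
    exact iff_of_true (mem_splice_self hi) hj
  rw [swap_apply_of_ne_of_ne hli hlj, splice_self]

lemma isDirPath_swapTails {a b : ι → V} {σ : Perm ι} {v : V} {i j : ι} {p : ι → List V}
    (hp : ∀ l, IsDirPath E (a l) (b (σ l)) (p l)) (hi : v ∈ p i) (hj : v ∈ p j) (l : ι) :
    IsDirPath E (a l) (b ((σ * swap i j) l)) (swapTails v i j p l) := by
  unfold swapTails
  rw [Perm.mul_apply]
  by_cases hli : l = i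
  · subst hli
    rw [swap_apply_left]
    exact (hp l).splice (hp j) hi hj
  by_cases hlj : l = j
  · subst hlj
    rw [swap_apply_right]
    exact (hp l).splice (hp i) hj hi
  rw [swap_apply_of_ne_of_ne hli hlj, splice_self]
  exact hp l

variable [Fintype ι]

lemma sum_count_swapTails (u v : V) (i j : ι) (p : ι → List V) :
    ∑ l, (swapTails v i j p l).count u = ∑ l, (p l).count u := by
  simp only [swapTails, splice, List.count_append, sum_add_distrib]
  rw [Equiv.sum_comp (swap i j) fun l => ((p l).dropWhile (· ≠ v)).count u, ← sum_add_distrib]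
  simp only [← List.count_append, List.takeWhile_append_dropWhile]

lemma prod_map_swapTails {M : Type*} [CommMonoid M] (w : V → M) (v : V) (i j : ι)
    (p : ι → List V) :
    ∏ l, ((swapTails v i j p l).map w).prod = ∏ l, ((p l).map w).prod := by
  simp only [swapTails, splice, List.map_append, List.prod_append, prod_mul_distrib]
  rw [Equiv.prod_comp (swap i j) fun l => (((p l).dropWhile (· ≠ v)).map w).prod,
    ← prod_mul_distrib]
  simp only [← List.prod_append, ← List.map_append, List.takeWhile_append_dropWhile]

/-- The sign-reversing cancellation of the Lindström–Gessel–Viennot lemma: the intersecting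
families of paths contribute nothing. -/
lemma sum_intersecting_eq_zero {R : Type*} [CommRing R]
    (hacyc : ∀ v : V, ¬ Relation.TransGen E v v) (a b : ι → V) (w : V → R)
    (B : Finset (Perm ι × (ι → List V)))
    (hB : ∀ x, x ∈ B ↔ (∀ l, IsDirPath E (a l) (b (x.1 l)) (x.2 l)) ∧
      ∃ v i j, i ≠ j ∧ v ∈ x.2 i ∧ v ∈ x.2 j) :
    ∑ x ∈ B, ((Perm.sign x.1 : ℤ) : R) * ∏ l, ((x.2 l).map w).prod = 0 := by
  obtain rfl | ⟨x₀, hx₀⟩ := B.eq_empty_or_nonempty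
  · simp
  obtain ⟨-, v₀, i₀, -⟩ := (hB x₀).1 hx₀
  have : Nonempty V := ⟨v₀⟩
  have : Nonempty ι := ⟨i₀⟩
  let c (p : ι → List V) : V := sharedVertex p
  let d (p : ι → List V) : ι × ι := sharedIndices (c p) p
  have key : ∀ x ∈ B, (d x.2).1 ≠ (d x.2).2 ∧ c x.2 ∈ x.2 (d x.2).1 ∧ c x.2 ∈ x.2 (d x.2).2 := by
    intro x hx
    obtain ⟨hp, v, i, j, h⟩ := (hB x).1 hx
    have hnd := fun l => (hp l).nodup hacyc
    have hc : 2 ≤ ∑ l, (x.2 l).count (c x.2) :=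
      Classical.epsilon_spec (p := fun v => 2 ≤ ∑ l, (x.2 l).count v)
        ⟨v, (two_le_sum_count_iff hnd v).2 ⟨(i, j), h⟩⟩
    exact Classical.epsilon_spec ((two_le_sum_count_iff hnd _).1 hc)
  let g (x : Perm ι × (ι → List V)) : Perm ι × (ι → List V) :=
    (x.1 * swap (d x.2).1 (d x.2).2, swapTails (c x.2) (d x.2).1 (d x.2).2 x.2)
  have hgc : ∀ x, c (g x).2 = c x.2 := by
    intro x
    simp only [c, g, sharedVertex, sum_count_swapTails]
  have hgd : ∀ x ∈ B, d (g x).2 = d x.2 := by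
    intro x hx
    obtain ⟨-, hi, hj⟩ := key x hx
    change sharedIndices (c (g x).2) (g x).2 = sharedIndices (c x.2) x.2
    rw [hgc]
    simp only [sharedIndices, g, mem_swapTails_iff hi hj]
  refine sum_involution (fun x _ => g x) ?_ ?_ ?_ ?_
  · intro x hx
    simp only [g, Perm.sign_mul, Perm.sign_swap (key x hx).1, prod_map_swapTails]
    simp
  · intro x hx _ h
    have h₁ : x.1 * swap (d x.2).1 (d x.2).2 = x.1 := congrArg Prod.fst h
    exact (key x hx).1 (swap_eq_one_iff.1 (mul_eq_left.1 h₁))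
  · intro x hx
    obtain ⟨hne, hi, hj⟩ := key x hx
    refine (hB _).2 ⟨isDirPath_swapTails ((hB x).1 hx).1 hi hj, c x.2, _, _, hne, ?_, ?_⟩
    · exact (mem_swapTails_iff hi hj _).2 hi
    · exact (mem_swapTails_iff hi hj _).2 hj
  · intro x hx
    have hd := hgd x hx
    have hc := hgc x
    change ((g x).1 * swap (d (g x).2).1 (d (g x).2).2,
      swapTails (c (g x).2) (d (g x).2).1 (d (g x).2).2 (g x).2) = x
    rw [hd, hc]
    simp only [g, swapTails_swapTails, mul_assoc, swap_mul_self, mul_one]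

/-- If vertex-disjoint families of paths only realise the identity permutation, then the
determinant of the matrix of path sums is nonnegative. -/
lemma det_pathSum_nonneg [Finite V] {R : Type*} [CommRing R] [PartialOrder R] [IsOrderedRing R]
    (hacyc : ∀ v : V, ¬ Relation.TransGen E v v) (a b : ι → V) (w : V → R) (hw : ∀ v, 0 ≤ w v)
    (hdisj : ∀ (σ : Perm ι) (p : ι → List V), (∀ i, IsDirPath E (a i) (b (σ i)) (p i)) →
      (∀ i j, i ≠ j → ∀ v, v ∈ p i → v ∉ p j) → σ = 1) :
    0 ≤ (Matrix.of fun i j =>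
      ∑ᶠ p ∈ {p : List V | IsDirPath E (a i) (b j) p}, (p.map w).prod).det := by
  classical
  have hfin := fun i j => finite_setOf_isDirPath hacyc (a i) (b j)
  let T : Finset (Perm ι × (ι → List V)) :=
    (univ.sigma fun σ : Perm ι => Fintype.piFinset fun l => (hfin l (σ l)).toFinset).map
      (Equiv.sigmaEquivProd _ _).toEmbedding
  have hT : ∀ x, x ∈ T ↔ ∀ l, IsDirPath E (a l) (b (x.1 l)) (x.2 l) := by
    rintro ⟨σ, p⟩
    simp [T]
  have hdet : (Matrix.of fun i j =>
      ∑ᶠ p ∈ {p : List V | IsDirPath E (a i) (b j) p}, (p.map w).prod).det =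
      ∑ x ∈ T, ((Perm.sign x.1 : ℤ) : R) * ∏ l, ((x.2 l).map w).prod := by
    rw [← Matrix.det_transpose, Matrix.det_apply', sum_map, sum_sigma]
    refine sum_congr rfl fun σ _ => ?_
    simp only [Matrix.transpose_apply, Matrix.of_apply,
      finsum_mem_eq_finite_toFinset_sum _ (hfin _ _)]
    rw [prod_univ_sum, mul_sum]
    rfl
  rw [hdet, ← sum_filter_add_sum_filter_not T fun x => ∃ v i j, i ≠ j ∧ v ∈ x.2 i ∧ v ∈ x.2 j,
    sum_intersecting_eq_zero hacyc a b w _ fun x => by rw [mem_filter, hT], zero_add]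
  refine sum_nonneg fun x hx => ?_
  rw [mem_filter, hT] at hx
  have hσ : x.1 = 1 := hdisj x.1 x.2 hx.1 fun i j hij v hi hj => hx.2 ⟨v, i, j, hij, hi, hj⟩
  rw [hσ]
  simp only [Perm.sign_one, Units.val_one, Int.cast_one, one_mul]
  refine prod_nonneg fun l _ => List.prod_nonneg fun y hy => ?_
  obtain ⟨v, -, rfl⟩ := List.mem_map.1 hy
  exact hw v

end LindstromGesselViennot

/-- The matrix of weighted path sums of a planar network with a nonnegative
vertex weighting is totally nonnegative. -/
theorem stmt_10 {V : Type} [Fintype V] [DecidableEq V]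
    (E : V → V → Prop)
    -- the digraph is acyclic
    (hacyc : ∀ v : V, ¬ Relation.TransGen E v v)
    {n n' : ℕ} (s : Fin n → V) (t : Fin n' → V)
    (w : V → ℝ) (hw : ∀ v, 0 ≤ w v)
    -- planarity (in the form used: any family of pairwise vertex-disjoint directed
    -- paths from sources to sinks connects them in the order-preserving way)
    (hplanar : ∀ (k : ℕ) (α : Fin k → Fin n) (β : Fin k → Fin n'),
      StrictMono α → StrictMono β →
      ∀ (σ : Equiv.Perm (Fin k)) (p : Fin k → List V),
        (∀ i, IsDirPath E (s (α i)) (t (β (σ i))) (p i)) →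
        (∀ i j, i ≠ j → ∀ v, v ∈ p i → v ∉ p j) → σ = 1)
    (Q : Matrix (Fin n) (Fin n') ℝ)
    (hQ : ∀ i j, Q i j = ∑ᶠ p ∈ {p : List V | IsDirPath E (s i) (t j) p}, (p.map w).prod) :
    ∀ (k : ℕ) (α : Fin k → Fin n) (β : Fin k → Fin n'),
      StrictMono α → StrictMono β → 0 ≤ (Q.submatrix α β).det := by
  intro k α β hα hβ
  have h := det_pathSum_nonneg hacyc (s ∘ α) (t ∘ β) w hw (hplanar k α β hα hβ)
  rwa [show Q.submatrix α β = _ from Matrix.ext fun i j => hQ (α i) (β j)]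
end
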